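/- Let m ≥ 2, r > 0, ε ∈ (0,1), and α = r(1+ε). Let z ∈ B_r(0) ⊂ ℝ^m with ‖z‖ ≥ εr. Then T^{(α,m)}(z) ≥ rε²/8 − r·√(πm/2)·(1 − ε²/16)^{(m-2)/2}, where T^{(α,m)}(z) := ∫_{B_r(0)}(α − ‖x‖) dμ^r(x) − ∫_{B_α(z) ∩ B_r(0)}(α − d(z,x)) dμ^r(x) and μ^r is the uniform probability measure on the sphere of radius r centered at the origin. -/

import Mathlib

open MeasureTheory Metric Real
open scoped ENNReal

/-- The uniform probability measure on the sphere of radius `s` centered at the origin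
in `ℝ^m`; for `s = 0` it is the Dirac measure at the origin. -/
noncomputable def sphereUniform (m : ℕ) (s : ℝ) : Measure (EuclideanSpace ℝ (Fin m)) :=
  if s = 0 then Measure.dirac 0
  else (μH[(m : ℝ) - 1] (sphere (0 : EuclideanSpace ℝ (Fin m)) s))⁻¹ •
    (μH[(m : ℝ) - 1]).restrict (sphere (0 : EuclideanSpace ℝ (Fin m)) s)

/-- `T^{(α,m)}(z) = ∫_{B_r(0)}(α − ‖x‖) dμ^r(x) − ∫_{B_α(z) ∩ B_r(0)}(α − d(z,x)) dμ^r(x)`. -/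
noncomputable def Tfun (m : ℕ) (α r : ℝ) (z : EuclideanSpace ℝ (Fin m)) : ℝ :=
  (∫ x in closedBall (0 : EuclideanSpace ℝ (Fin m)) r, (α - ‖x‖) ∂(sphereUniform m r)) -
    ∫ x in closedBall z α ∩ closedBall (0 : EuclideanSpace ℝ (Fin m)) r,
      (α - dist z x) ∂(sphereUniform m r)

/-!
With `ρ = r (1 + ε² / 8)`, the integrand `α - dist z x` is at most `α - ρ`, except on the ball of
radius `ρ` around `z`, where it is at most `α`; this gives `T ≥ ρ - r - ρ μ^r(ball z ρ)`. As
`‖z‖ ≥ ε r`, every point of the sphere in that ball makes an angle less than `arccos (ε / 4)` with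
`z`, by the law of cosines and `(1 + ε² / 8)² ≤ 1 + ε² / 2`.

The measure of that cone is bounded by double counting instead of an integral over angles. By
rotation invariance, the probability that a point `x` of the sphere makes a small angle with `y`
does not depend on `y`, so `y` may be averaged over the unit ball. For fixed `x`, the part of the
unit ball in the cone around `x` lies in a ball of radius `√(1 - ε² / 16)`, hence the bound
`√(1 - ε² / 16) ^ m`.
-/

open Module (finrank)

section HausdorffMeasureSphere

lemma hausdorffMeasure_image_lt_top_of_locallyLipschitz {F Y : Type*}
    [NormedAddCommGroup F] [NormedSpace ℝ F] [FiniteDimensional ℝ F]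
    [MeasurableSpace F] [BorelSpace F] [MetricSpace Y] [MeasurableSpace Y] [BorelSpace Y]
    {f : F → Y} (hf : LocallyLipschitz f) {K : Set F} (hK : IsCompact K) :
    μH[finrank ℝ F] (f '' K) < ∞ := by
  obtain ⟨C, hC⟩ := hf.locallyLipschitzOn.exists_lipschitzOnWith_of_compact hK
  exact (hC.hausdorffMeasure_image_le (Nat.cast_nonneg _)).trans_lt
    (ENNReal.mul_lt_top (by finiteness) hK.measure_lt_top)

variable {E : Type*} [NormedAddCommGroup E] [InnerProductSpace ℝ E]

lemma norm_stereoToFun_le_two {v x : E} (hx : ‖x‖ ≤ 1) (hvx : inner ℝ v x ≤ 0) :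
    ‖stereoToFun v x‖ ≤ 2 := by
  rw [stereoToFun_apply, norm_smul, innerSL_apply_apply, Real.norm_of_nonneg (by bound)]
  have hdiv : 2 / (1 - inner ℝ v x) ≤ 2 := div_le_self zero_le_two (by linarith)
  have hproj : ‖(ℝ ∙ v)ᗮ.orthogonalProjectionOnto x‖ ≤ 1 :=
    ((ℝ ∙ v)ᗮ.norm_orthogonalProjectionOnto_apply_le x).trans hx
  nlinarith [norm_nonneg ((ℝ ∙ v)ᗮ.orthogonalProjectionOnto x)]

lemma hemisphere_subset_image_stereoInvFunAux {v : E} (hv : ‖v‖ = 1) :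
    {x ∈ sphere (0 : E) 1 | inner ℝ v x ≤ 0} ⊆
      (fun w : (ℝ ∙ v)ᗮ ↦ stereoInvFunAux v (w : E)) '' closedBall 0 2 := by
  rintro x ⟨hx, hvx⟩
  have hxv : x ≠ v := by
    rintro rfl
    exact hvx.not_gt (real_inner_self_pos.2 (ne_zero_of_norm_ne_zero (by simp [hv])))
  refine ⟨stereoToFun v x, ?_, congrArg Subtype.val (stereo_left_inv (x := ⟨x, hx⟩) hv hxv)⟩
  exact mem_closedBall_zero_iff.2
    (norm_stereoToFun_le_two (mem_sphere_zero_iff_norm.1 hx).le hvx)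

lemma closedBall_subset_orthogonalProjectionOnto_image_sphere {v : E} (hv : ‖v‖ = 1) :
    closedBall (0 : (ℝ ∙ v)ᗮ) 1 ⊆
      (ℝ ∙ v)ᗮ.orthogonalProjectionOnto '' sphere (0 : E) 1 := by
  intro w hw
  have hw1 : ‖(w : E)‖ ^ 2 ≤ 1 :=
    pow_le_one₀ (norm_nonneg _) (mem_closedBall_zero_iff.1 hw)
  have hwv : inner ℝ (w : E) v = 0 :=
    Submodule.mem_orthogonal_singleton_iff_inner_left.1 w.2
  refine ⟨w + √(1 - ‖(w : E)‖ ^ 2) • v, ?_, ?_⟩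
  · rw [mem_sphere_zero_iff_norm, ← sq_eq_sq₀ (norm_nonneg _) zero_le_one, norm_add_sq_real,
      inner_smul_right, hwv, norm_smul, hv, Real.norm_of_nonneg (Real.sqrt_nonneg _), mul_one,
      Real.sq_sqrt (sub_nonneg.2 hw1)]
    ring
  · rw [map_add, map_smul, Submodule.orthogonalProjectionOnto_mem_subspace_eq_self,
      Submodule.orthogonalProjectionOnto_orthogonalComplement_singleton_eq_zero, smul_zero,
      add_zero]

variable [MeasurableSpace E] [BorelSpace E]

lemma hausdorffMeasure_sphere_zero [Nontrivial E] {d r : ℝ} (hd : 0 ≤ d) (hr : 0 < r) :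
    μH[d] (sphere (0 : E) r) = ‖r‖₊ ^ d • μH[d] (sphere (0 : E) 1) := by
  rw [← Measure.hausdorffMeasure_smul₀ hd hr.ne', smul_sphere r 0 zero_le_one, smul_zero, mul_one,
    Real.norm_of_nonneg hr.le]

variable {n : ℕ} [Fact (finrank ℝ E = n + 1)]

lemma hausdorffMeasure_hemisphere_lt_top {v : E} (hv : ‖v‖ = 1) :
    μH[n] {x ∈ sphere (0 : E) 1 | inner ℝ v x ≤ 0} < ∞ := by
  have : FiniteDimensional ℝ E := .of_fact_finrank_eq_succ n
  have hsmooth : ContDiff ℝ 1 fun w : (ℝ ∙ v)ᗮ ↦ stereoInvFunAux v (w : E) :=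
    contDiff_stereoInvFunAux.comp (ℝ ∙ v)ᗮ.subtypeL.contDiff
  have himage := hausdorffMeasure_image_lt_top_of_locallyLipschitz hsmooth.locallyLipschitz
    (isCompact_closedBall 0 2)
  rw [Submodule.finrank_orthogonal_span_singleton (n := n) (ne_zero_of_norm_ne_zero (by simp [hv]))]
    at himage
  exact (measure_mono (hemisphere_subset_image_stereoInvFunAux hv)).trans_lt himage

lemma hausdorffMeasure_unitSphere_lt_top : μH[n] (sphere (0 : E) 1) < ∞ := by
  have : Nontrivial E := Module.nontrivial_of_finrank_eq_succ (n := n) (R := ℝ) Fact.out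
  obtain ⟨v, hv⟩ := exists_norm_eq E zero_le_one
  have hcover : sphere (0 : E) 1 ⊆
      {x ∈ sphere (0 : E) 1 | inner ℝ v x ≤ 0} ∪ {x ∈ sphere (0 : E) 1 | inner ℝ (-v) x ≤ 0} := by
    intro x hx
    simpa [hx, inner_neg_left, -mem_sphere_iff_norm, -mem_sphere] using le_total (inner ℝ v x) 0
  exact (measure_mono hcover).trans_lt (measure_union_lt_top
    (hausdorffMeasure_hemisphere_lt_top hv)
    (hausdorffMeasure_hemisphere_lt_top (by rwa [norm_neg])))

lemma hausdorffMeasure_unitSphere_pos : 0 < μH[n] (sphere (0 : E) 1) := by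
  have : FiniteDimensional ℝ E := .of_fact_finrank_eq_succ n
  have : Nontrivial E := Module.nontrivial_of_finrank_eq_succ (n := n) (R := ℝ) Fact.out
  obtain ⟨v, hv⟩ := exists_norm_eq E zero_le_one
  have hball := measure_closedBall_pos μH[finrank ℝ (ℝ ∙ v)ᗮ] (0 : (ℝ ∙ v)ᗮ) one_pos
  rw [Submodule.finrank_orthogonal_span_singleton (n := n) (ne_zero_of_norm_ne_zero (by simp [hv]))]
    at hball
  calc 0 < μH[n] (closedBall (0 : (ℝ ∙ v)ᗮ) 1) := hball
    _ ≤ μH[n] ((ℝ ∙ v)ᗮ.orthogonalProjectionOnto '' sphere (0 : E) 1) :=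
      measure_mono (closedBall_subset_orthogonalProjectionOnto_image_sphere hv)
    _ ≤ μH[n] (sphere (0 : E) 1) :=
      hausdorffMeasure_orthogonalProjectionOnto_le _ _ _ (Nat.cast_nonneg n)

end HausdorffMeasureSphere

section CircularCone

variable {E : Type*} [NormedAddCommGroup E] [InnerProductSpace ℝ E]

/-- The open circular cone of the nonzero vectors that make an angle less than `arccos t` with `z`,
where `-1 ≤ t ≤ 1`. It is encoded without division by the norms, so that the condition is symmetric
in the two vectors and the cone around `0` is empty. -/
def circularCone (z : E) (t : ℝ) : Set E :=
  {x | t * (‖x‖ * ‖z‖) < inner ℝ x z}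

/-- A measure on an inner product space is rotation invariant if every linear isometric
automorphism, reflections included, preserves it. This is the only property of the uniform measure
on the sphere that the bound on the measure of a cone depends on. -/
def IsRotationInvariant [MeasurableSpace E] (σ : Measure E) : Prop :=
  ∀ L : E ≃ₗᵢ[ℝ] E, MeasurePreserving L σ σ

lemma circularCone_zero (t : ℝ) : circularCone (0 : E) t = ∅ := by
  simp [circularCone]

lemma mem_circularCone_comm {x z : E} {t : ℝ} : x ∈ circularCone z t ↔ z ∈ circularCone x t := by
  simp only [circularCone, Set.mem_ofPred_eq, mul_comm ‖x‖, real_inner_comm x z]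

lemma circularCone_smul {k : ℝ} (hk : 0 < k) (z : E) (t : ℝ) :
    circularCone (k • z) t = circularCone z t := by
  ext x
  simp only [circularCone, Set.mem_ofPred_eq, inner_smul_right, norm_smul,
    Real.norm_of_nonneg hk.le]
  rw [mul_left_comm ‖x‖, mul_left_comm t, mul_lt_mul_iff_right₀ hk]

lemma preimage_circularCone (L : E ≃ₗᵢ[ℝ] E) (z : E) (t : ℝ) :
    L ⁻¹' circularCone (L z) t = circularCone z t := by
  ext x
  simp only [circularCone, Set.mem_preimage, Set.mem_ofPred_eq, L.norm_map, L.inner_map_map]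

lemma isOpen_setOf_mem_circularCone (t : ℝ) : IsOpen {p : E × E | p.1 ∈ circularCone p.2 t} := by
  simp only [circularCone, Set.mem_ofPred_eq]
  exact isOpen_lt (by fun_prop) (by fun_prop)

lemma isOpen_circularCone (z : E) (t : ℝ) : IsOpen (circularCone z t) :=
  (isOpen_setOf_mem_circularCone t).preimage (Continuous.prodMk_left z)

lemma circularCone_inter_closedBall_subset {x : E} (hx : x ≠ 0) {t : ℝ} (ht : 0 ≤ t)
    (ht' : 2 * t ^ 2 ≤ 1) :
    circularCone x t ∩ closedBall 0 1 ⊆ closedBall ((t / ‖x‖) • x) √(1 - t ^ 2) := by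
  rintro y ⟨hyx, hy⟩
  rw [mem_closedBall_zero_iff] at hy
  have hx0 : 0 < ‖x‖ := norm_pos_iff.2 hx
  have hinner : t ^ 2 * ‖y‖ ≤ t / ‖x‖ * inner ℝ y x := by
    calc t ^ 2 * ‖y‖ = t / ‖x‖ * (t * (‖y‖ * ‖x‖)) := by field_simp
      _ ≤ t / ‖x‖ * inner ℝ y x := by gcongr; exact hyx.le
  have hcenter : ‖(t / ‖x‖) • x‖ = t := by
    rw [norm_smul, Real.norm_of_nonneg (by positivity), div_mul_cancel₀ _ hx0.ne']
  rw [mem_closedBall, dist_eq_norm]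
  refine Real.le_sqrt_of_sq_le ?_
  calc ‖y - (t / ‖x‖) • x‖ ^ 2 = ‖y‖ ^ 2 - 2 * (t / ‖x‖ * inner ℝ y x) + t ^ 2 := by
        rw [norm_sub_sq_real, inner_smul_right, hcenter]
    _ ≤ ‖y‖ ^ 2 - 2 * (t ^ 2 * ‖y‖) + t ^ 2 := by gcongr
    _ ≤ 1 - t ^ 2 := by
        nlinarith [mul_nonneg (sub_nonneg.2 hy)
          (by linarith [norm_nonneg y] : 0 ≤ ‖y‖ + (1 - 2 * t ^ 2))]

lemma mul_norm_le_dist_of_notMem_circularCone {x z : E} {ε : ℝ} (hε : 0 ≤ ε) (hε' : ε ^ 2 ≤ 16)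
    (hz : ε * ‖x‖ ≤ ‖z‖) (hx : x ∉ circularCone z (ε / 4)) :
    ‖x‖ * (1 + ε ^ 2 / 8) ≤ dist x z := by
  have hinner : inner ℝ x z ≤ ε / 4 * (‖x‖ * ‖z‖) := not_lt.1 hx
  rw [dist_eq_norm]
  refine (sq_le_sq₀ (by positivity) (norm_nonneg _)).1 ?_
  have hquad : ε * ‖x‖ * (ε * ‖x‖ / 2) ≤ ‖z‖ * (‖z‖ - ε * ‖x‖ / 2) := by
    have : 0 ≤ ε * ‖x‖ := by positivity
    gcongr
    linarith
  calc (‖x‖ * (1 + ε ^ 2 / 8)) ^ 2 = (1 + ε ^ 2 / 8) ^ 2 * ‖x‖ ^ 2 := by ring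
    _ ≤ (1 + ε ^ 2 / 2) * ‖x‖ ^ 2 := by gcongr; nlinarith [sq_nonneg ε]
    _ ≤ ‖x‖ ^ 2 - 2 * (ε / 4 * (‖x‖ * ‖z‖)) + ‖z‖ ^ 2 := by linarith
    _ ≤ ‖x‖ ^ 2 - 2 * inner ℝ x z + ‖z‖ ^ 2 := by gcongr
    _ = ‖x - z‖ ^ 2 := (norm_sub_sq_real x z).symm

variable [MeasurableSpace E] [BorelSpace E]

lemma IsRotationInvariant.measure_circularCone_eq {σ : Measure E} (hσ : IsRotationInvariant σ)
    {y z : E} (hy : y ≠ 0) (hz : z ≠ 0) (t : ℝ) :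
    σ (circularCone y t) = σ (circularCone z t) := by
  have hk : 0 < ‖z‖ / ‖y‖ := div_pos (norm_pos_iff.2 hz) (norm_pos_iff.2 hy)
  have hnorm : ‖z‖ = ‖(‖z‖ / ‖y‖) • y‖ := by
    rw [norm_smul, Real.norm_of_nonneg hk.le, div_mul_cancel₀ _ (norm_ne_zero_iff.2 hy)]
  set L := (ℝ ∙ (z - (‖z‖ / ‖y‖) • y))ᗮ.reflection
  have hL : L z = (‖z‖ / ‖y‖) • y := Submodule.reflection_sub hnorm
  calc σ (circularCone y t) = σ (circularCone (L z) t) := by rw [hL, circularCone_smul hk]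
    _ = σ (L ⁻¹' circularCone (L z) t) :=
      ((hσ L).measure_preimage (isOpen_circularCone _ t).measurableSet.nullMeasurableSet).symm
    _ = σ (circularCone z t) := by rw [preimage_circularCone]

variable [FiniteDimensional ℝ E]

lemma volume_circularCone_inter_closedBall_le (x : E) {t : ℝ} (ht : 0 ≤ t)
    (ht' : 2 * t ^ 2 ≤ 1) :
    volume (circularCone x t ∩ closedBall 0 1) ≤
      ENNReal.ofReal (√(1 - t ^ 2) ^ finrank ℝ E) * volume (closedBall (0 : E) 1) := by
  rcases eq_or_ne x 0 with rfl | hx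
  · simp [circularCone_zero]
  · calc volume (circularCone x t ∩ closedBall 0 1)
        ≤ volume (closedBall ((t / ‖x‖) • x) √(1 - t ^ 2)) :=
          measure_mono (circularCone_inter_closedBall_subset hx ht ht')
      _ = ENNReal.ofReal (√(1 - t ^ 2) ^ finrank ℝ E) * volume (closedBall (0 : E) 1) :=
          Measure.addHaar_closedBall' _ _ (Real.sqrt_nonneg _)

theorem IsRotationInvariant.measure_circularCone_le {σ : Measure E} [SFinite σ]
    (hσ : IsRotationInvariant σ) (z : E) {t : ℝ} (ht : 0 ≤ t) (ht' : 2 * t ^ 2 ≤ 1) :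
    σ (circularCone z t) ≤ ENNReal.ofReal (√(1 - t ^ 2) ^ finrank ℝ E) * σ Set.univ := by
  rcases eq_or_ne z 0 with rfl | hz
  · simp [circularCone_zero]
  have : Nontrivial E := ⟨z, 0, hz⟩
  set B := closedBall (0 : E) 1
  have hB0 : volume B ≠ 0 := (measure_closedBall_pos volume _ one_pos).ne'
  have hBtop : volume B ≠ ∞ := measure_closedBall_lt_top.ne
  set A : Set (E × E) := {p | p.1 ∈ circularCone p.2 t}
  have hA : MeasurableSet A := (isOpen_setOf_mem_circularCone t).measurableSet
  have hfst : σ.prod (volume.restrict B) A = σ (circularCone z t) * volume B := by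
    have hsection : ∀ᵐ y ∂volume.restrict B, σ (circularCone y t) = σ (circularCone z t) := by
      filter_upwards [ae_restrict_of_ae (Measure.ae_ne volume 0)] with y hy
      exact hσ.measure_circularCone_eq hy hz t
    calc σ.prod (volume.restrict B) A = ∫⁻ y in B, σ (circularCone y t) :=
          Measure.prod_apply_symm hA
      _ = σ (circularCone z t) * volume B := by
          rw [lintegral_congr_ae hsection, lintegral_const, Measure.restrict_apply_univ]
  have hsnd : σ.prod (volume.restrict B) A ≤
      ENNReal.ofReal (√(1 - t ^ 2) ^ finrank ℝ E) * σ Set.univ * volume B := by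
    calc σ.prod (volume.restrict B) A = ∫⁻ x, volume (circularCone x t ∩ B) ∂σ := by
          rw [Measure.prod_apply hA]
          refine lintegral_congr fun x ↦ ?_
          have hsection : Prod.mk x ⁻¹' A = circularCone x t :=
            Set.ext fun y ↦ mem_circularCone_comm
          rw [hsection, Measure.restrict_apply (isOpen_circularCone x t).measurableSet]
      _ ≤ ∫⁻ _, ENNReal.ofReal (√(1 - t ^ 2) ^ finrank ℝ E) * volume B ∂σ :=
          lintegral_mono fun x ↦ volume_circularCone_inter_closedBall_le x ht ht'
      _ = _ := by rw [lintegral_const, mul_right_comm]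
  exact (ENNReal.mul_le_mul_iff_left hB0 hBtop).1 (hfst ▸ hsnd)

end CircularCone

section SphereUniform

variable {m : ℕ} {r : ℝ}

lemma isProbabilityMeasure_sphereUniform (hm : 1 ≤ m) (hr : 0 ≤ r) :
    IsProbabilityMeasure (sphereUniform m r) := by
  rcases hr.eq_or_lt with rfl | hr
  · rw [sphereUniform, if_pos rfl]
    infer_instance
  obtain ⟨n, rfl⟩ : ∃ n, m = n + 1 := Nat.exists_eq_add_of_le' hm
  have : Fact (finrank ℝ (EuclideanSpace ℝ (Fin (n + 1))) = n + 1) :=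
    ⟨finrank_euclideanSpace_fin⟩
  constructor
  rw [sphereUniform, if_neg hr.ne', Nat.cast_add_one, add_sub_cancel_right, Measure.smul_apply,
    Measure.restrict_apply_univ, smul_eq_mul]
  refine ENNReal.inv_mul_cancel ?_ ?_ <;>
    rw [hausdorffMeasure_sphere_zero n.cast_nonneg hr]
  · simpa [ENNReal.smul_def, hr.ne'] using hausdorffMeasure_unitSphere_pos.ne'
  · exact ENNReal.mul_ne_top ENNReal.coe_ne_top hausdorffMeasure_unitSphere_lt_top.ne

lemma ae_norm_eq_sphereUniform (hr : 0 ≤ r) : ∀ᵐ x ∂sphereUniform m r, ‖x‖ = r := by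
  rcases hr.eq_or_lt with rfl | hr
  · simp [sphereUniform, ae_dirac_eq]
  rw [sphereUniform, if_neg hr.ne']
  refine Measure.ae_smul_measure ?_ _
  filter_upwards [ae_restrict_mem isClosed_sphere.measurableSet] with x hx
  exact mem_sphere_zero_iff_norm.1 hx

lemma isRotationInvariant_sphereUniform : IsRotationInvariant (sphereUniform m r) := by
  intro L
  rcases eq_or_ne r 0 with rfl | hr
  · refine ⟨L.continuous.measurable, ?_⟩
    rw [sphereUniform, if_pos rfl, Measure.map_dirac' L.continuous.measurable, map_zero]
  rw [sphereUniform, if_neg hr]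
  have hpre : L.toIsometryEquiv ⁻¹' sphere (0 : EuclideanSpace ℝ (Fin m)) r = sphere 0 r := by
    ext x
    simp
  have hrestrict := (L.toIsometryEquiv.measurePreserving_hausdorffMeasure
    ((m : ℝ) - 1)).restrict_preimage
    (isClosed_sphere (x := (0 : EuclideanSpace ℝ (Fin m))) (ε := r)).measurableSet
  rw [hpre] at hrestrict
  exact hrestrict.smul_measure _

end SphereUniform

section Coefficients

lemma sqrt_pow_le_rpow {a : ℝ} (ha : 0 < a) (ha' : a ≤ 1) (m : ℕ) :
    √a ^ m ≤ a ^ (((m : ℝ) - 2) / 2) := by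
  rw [Real.sqrt_eq_rpow, ← Real.rpow_natCast, ← Real.rpow_mul ha.le]
  exact Real.rpow_le_rpow_of_exponent_ge ha ha' (by linarith)

lemma one_add_le_sqrt_pi_mul {m : ℕ} (hm : 1 ≤ m) {ε : ℝ} (hε : ε ^ 2 ≤ 2) :
    1 + ε ^ 2 / 8 ≤ √(π * m / 2) := by
  have hm' : (1 : ℝ) ≤ m := by exact_mod_cast hm
  refine Real.le_sqrt_of_sq_le ?_
  calc (1 + ε ^ 2 / 8) ^ 2 ≤ (1 + 2 / 8) ^ 2 := by gcongr
    _ ≤ 3.14 * 1 / 2 := by norm_num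
    _ ≤ π * m / 2 := by gcongr; exact Real.pi_gt_d2.le

lemma mul_one_add_mul_sqrt_pow_le {m : ℕ} (hm : 1 ≤ m) {r ε : ℝ} (hr : 0 ≤ r) (hε : ε ^ 2 ≤ 2) :
    r * (1 + ε ^ 2 / 8) * √(1 - ε ^ 2 / 16) ^ m ≤
      r * √(π * m / 2) * (1 - ε ^ 2 / 16) ^ (((m : ℝ) - 2) / 2) := by
  have hconst : 1 + ε ^ 2 / 8 ≤ √(π * m / 2) := one_add_le_sqrt_pi_mul hm hε
  have hrate := sqrt_pow_le_rpow (a := 1 - ε ^ 2 / 16) (by linarith) (by linarith [sq_nonneg ε]) m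
  gcongr

end Coefficients

section Tfun

lemma setIntegral_sub_dist_le {X : Type*} [PseudoMetricSpace X] [MeasurableSpace X]
    [OpensMeasurableSpace X] (σ : Measure X) [IsFiniteMeasure σ] (z : X) {S : Set X}
    (hS : MeasurableSet S) {α ρ : ℝ} (hρ : 0 ≤ ρ) (hρα : ρ ≤ α) :
    ∫ x in closedBall z α ∩ S, (α - dist z x) ∂σ ≤
      (α - ρ) * σ.real Set.univ + ρ * σ.real (ball z ρ) := by
  have hint : Integrable ((ball z ρ).indicator fun _ ↦ ρ) σ :=
    (integrable_const ρ).indicator measurableSet_ball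
  calc ∫ x in closedBall z α ∩ S, (α - dist z x) ∂σ
      = ∫ x, (closedBall z α ∩ S).indicator (fun x ↦ α - dist z x) x ∂σ :=
        (integral_indicator (measurableSet_closedBall.inter hS)).symm
    _ ≤ ∫ x, (α - ρ + (ball z ρ).indicator (fun _ ↦ ρ) x) ∂σ := by
        refine integral_mono_of_nonneg (.of_forall fun x ↦ ?_)
          ((integrable_const _).add hint) (.of_forall fun x ↦ ?_)
        · exact Set.indicator_nonneg (fun x hx ↦ sub_nonneg.2 (mem_closedBall'.1 hx.1)) x
        · have hbound : α - dist z x ≤ α - ρ + (ball z ρ).indicator (fun _ ↦ ρ) x := by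
            by_cases hx : x ∈ ball z ρ
            · rw [Set.indicator_of_mem hx]
              linarith [dist_nonneg (x := z) (y := x)]
            · rw [Set.indicator_of_notMem hx]
              linarith [not_lt.1 (mt mem_ball'.2 hx)]
          exact Set.indicator_apply_le' (fun _ ↦ hbound) fun _ ↦
            add_nonneg (sub_nonneg.2 hρα) (Set.indicator_nonneg (fun _ _ ↦ hρ) x)
    _ = (α - ρ) * σ.real Set.univ + ρ * σ.real (ball z ρ) := by
        rw [integral_add (integrable_const _) hint, integral_indicator_const _ measurableSet_ball,
          integral_const, smul_eq_mul, smul_eq_mul, mul_comm (α - ρ), mul_comm ρ]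

variable {m : ℕ} {r : ℝ}

lemma setIntegral_sub_norm_sphereUniform (hm : 1 ≤ m) (hr : 0 ≤ r) (α : ℝ) :
    ∫ x in closedBall 0 r, (α - ‖x‖) ∂sphereUniform m r = α - r := by
  have := isProbabilityMeasure_sphereUniform hm hr
  have hnorm := ae_norm_eq_sphereUniform (m := m) hr
  rw [Measure.restrict_eq_self_of_ae_mem
      (by filter_upwards [hnorm] with x hx using mem_closedBall_zero_iff.2 hx.le),
    integral_congr_ae (g := fun _ ↦ α - r) (by filter_upwards [hnorm] with x hx; rw [hx])]
  simp

lemma le_Tfun (hm : 1 ≤ m) (hr : 0 ≤ r) (z : EuclideanSpace ℝ (Fin m)) {α ρ : ℝ} (hρ : 0 ≤ ρ)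
    (hρα : ρ ≤ α) :
    ρ - r - ρ * (sphereUniform m r).real (ball z ρ) ≤ Tfun m α r z := by
  have := isProbabilityMeasure_sphereUniform hm hr
  rw [Tfun, setIntegral_sub_norm_sphereUniform hm hr]
  have hdist := setIntegral_sub_dist_le (sphereUniform m r) z
    (measurableSet_closedBall (x := 0) (ε := r)) hρ hρα
  rw [probReal_univ, mul_one] at hdist
  linarith

lemma sphereUniform_real_ball_le (hm : 1 ≤ m) (hr : 0 ≤ r) {ε : ℝ} (hε : 0 ≤ ε) (hε' : ε ^ 2 ≤ 8)
    {z : EuclideanSpace ℝ (Fin m)} (hz : ε * r ≤ ‖z‖) :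
    (sphereUniform m r).real (ball z (r * (1 + ε ^ 2 / 8))) ≤ √(1 - ε ^ 2 / 16) ^ m := by
  have := isProbabilityMeasure_sphereUniform hm hr
  have hball : ball z (r * (1 + ε ^ 2 / 8)) ≤ᵐ[sphereUniform m r] circularCone z (ε / 4) := by
    filter_upwards [ae_norm_eq_sphereUniform hr] with x hx hxz
    by_contra hcone
    subst hx
    exact (mem_ball.1 hxz).not_ge
      (mul_norm_le_dist_of_notMem_circularCone hε (by linarith) hz hcone)
  have hcone := isRotationInvariant_sphereUniform (m := m) (r := r).measure_circularCone_le z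
    (t := ε / 4) (by positivity) (by linarith)
  rw [measure_univ, mul_one, finrank_euclideanSpace_fin,
    show (ε / 4) ^ 2 = ε ^ 2 / 16 by ring] at hcone
  exact ENNReal.toReal_le_of_le_ofReal (by positivity) ((measure_mono_ae hball).trans hcone)

theorem stmt11_general (hm : 1 ≤ m) (hr : 0 ≤ r) {ε α : ℝ} (hε : 0 ≤ ε) (hε' : ε ^ 2 ≤ 8)
    (hα : r * (1 + ε ^ 2 / 8) ≤ α) {z : EuclideanSpace ℝ (Fin m)} (hz : ε * r ≤ ‖z‖) :
    r * ε ^ 2 / 8 - r * (1 + ε ^ 2 / 8) * √(1 - ε ^ 2 / 16) ^ m ≤ Tfun m α r z := by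
  have hρ : 0 ≤ r * (1 + ε ^ 2 / 8) := by positivity
  calc r * ε ^ 2 / 8 - r * (1 + ε ^ 2 / 8) * √(1 - ε ^ 2 / 16) ^ m
      ≤ r * ε ^ 2 / 8 -
          r * (1 + ε ^ 2 / 8) * (sphereUniform m r).real (ball z (r * (1 + ε ^ 2 / 8))) := by
        gcongr
        exact sphereUniform_real_ball_le hm hr hε hε' hz
    _ = r * (1 + ε ^ 2 / 8) - r -
          r * (1 + ε ^ 2 / 8) * (sphereUniform m r).real (ball z (r * (1 + ε ^ 2 / 8))) := by ring
    _ ≤ Tfun m α r z := le_Tfun hm hr z hρ hα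

end Tfun

/-- For `m ≥ 2`, `r > 0`, `ε ∈ (0,1)`, `α = r(1+ε)` and `z ∈ B_r(0)` with `‖z‖ ≥ εr`,
`T^{(α,m)}(z) ≥ rε²/8 − r √(πm/2) (1 − ε²/16)^{(m−2)/2}`. -/
theorem stmt11 (m : ℕ) (hm : 2 ≤ m) (r ε : ℝ) (hr : 0 < r) (hε : ε ∈ Set.Ioo (0 : ℝ) 1)
    (z : EuclideanSpace ℝ (Fin m)) (hz : z ∈ closedBall (0 : EuclideanSpace ℝ (Fin m)) r)
    (hzε : ε * r ≤ ‖z‖) :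
    r * ε ^ 2 / 8 -
        r * Real.sqrt (π * m / 2) * (1 - ε ^ 2 / 16) ^ (((m : ℝ) - 2) / 2) ≤
      Tfun m (r * (1 + ε)) r z := by
  have hε2 : ε ^ 2 ≤ 1 := pow_le_one₀ hε.1.le hε.2.le
  exact (sub_le_sub_left (mul_one_add_mul_sqrt_pow_le (by omega) hr.le (by linarith)) _).trans
    (stmt11_general (by omega) hr.le hε.1.le (by linarith) (by gcongr; nlinarith [hε.1]) hzε)
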